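/- Let n ≥ 2 and let K ⊂ ℝ^{n+1} be a smooth, strictly convex body with the origin in its interior, whose support function h, radial function r, and Gauss curvature 𝒦 satisfy h^{p-1} |Dh|^{n+1-q} 𝒦 = 1 on S^n. Set α = q − n − 1 and dV = h σ_n dμ with σ_n = 1/𝒦. Then ∫ r^{α} X dV = ∫ X h^{p} dμ = ((n+1+p)/n) ∫ r^{α} ∇̄h dV, as identities of vectors in ℝ^{n+1}, where X = Dh = ∇̄h + h x and μ is the spherical Lebesgue measure. -/

import Mathlib

open MeasureTheory Matrix Metric
open scoped RealInnerProductSpace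

noncomputable section

/-- Euclidean space `ℝ^{n+1}`. -/
abbrev Euc (n : ℕ) : Type := EuclideanSpace ℝ (Fin (n + 1))

/-- The Euclidean Hessian matrix of `H : ℝ^{n+1} → ℝ` at `x`. -/
def ehess (n : ℕ) (H : Euc n → ℝ) (x : Euc n) : Matrix (Fin (n + 1)) (Fin (n + 1)) ℝ :=
  Matrix.of fun i j =>
    fderiv ℝ (fun y => fderiv ℝ H y (EuclideanSpace.single j 1)) x (EuclideanSpace.single i 1)

/-- For the 1-homogeneous extension `H` of the support function `h` and `x ∈ S^n`, the matrix
`D²H(x) + h(x)·x xᵀ`.  Its restriction to the tangent space `x^⊥ = T_x S^n` is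
`A[h] = ∇̄²h + h ḡ`, and `x` is an eigenvector with eigenvalue `h(x)`. -/
def bmat (n : ℕ) (H : Euc n → ℝ) (x : Euc n) : Matrix (Fin (n + 1)) (Fin (n + 1)) ℝ :=
  ehess n H x + Matrix.of fun i j => H x * (x i * x j)

/-- `σ_n = det A[h] = det(∇̄²h + h ḡ)/det ḡ`, computed as `det(bmat)/h`. -/
def sigman (n : ℕ) (H : Euc n → ℝ) (x : Euc n) : ℝ :=
  Matrix.det (bmat n H x) / H x

/-- The Gauss curvature `𝒦 = 1/σ_n`. -/
def gaussCurv (n : ℕ) (H : Euc n → ℝ) (x : Euc n) : ℝ := (sigman n H x)⁻¹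

/-- The round (spherical) gradient `∇̄f` at `x ∈ S^n`: the Euclidean gradient of the
0-homogeneous extension `y ↦ f(y/‖y‖)`.  It depends only on `f|_{S^n}` and lies in `T_x S^n`. -/
def sphGrad (n : ℕ) (f : Euc n → ℝ) (x : Euc n) : Euc n :=
  gradient (fun y => f (‖y‖⁻¹ • y)) x

/-- The function `log (h^{n+2}/𝒦)` (as a function of `y`; on the sphere it agrees with the
centro-affine expression appearing in the paper). -/
def logQ (n : ℕ) (H : Euc n → ℝ) (y : Euc n) : ℝ :=
  Real.log ((H y) ^ (n + 2) / gaussCurv n H y)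

/-- The centro-affine inner product `g(∇f, ∇u) = h ⟨A[h]⁻¹ ∇̄f, ∇̄u⟩` of the `g`-gradients of
`f` and `u`, where `g = A[h]/h` is the centro-affine metric. -/
def gInner (n : ℕ) (H f u : Euc n → ℝ) (x : Euc n) : ℝ :=
  H x * ∑ i, (bmat n H x)⁻¹.mulVec (fun j => sphGrad n f x j) i * sphGrad n u x i

/-- The squared centro-affine norm `|∇f|_g²` of the `g`-gradient of `f`. -/
def gNormSq (n : ℕ) (H f : Euc n → ℝ) (x : Euc n) : ℝ := gInner n H f f x

/-- The centro-affine Laplacian `Δf = div_g(∇ f)` (with respect to the centro-affine connection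
`∇` induced by the centro-affine normal `ξ = X`, and the centro-affine metric `g = A[h]/h`),
computed via the identity `Δf = tr_g(A[hf]/h) - n f`, i.e.
`Δf = tr(B[h]⁻¹ B[hf]) - (n+1) f` where `B[u] = D²ũ + u·x xᵀ` for the 1-homogeneous
extension `ũ` of `u`. -/
def caLap (n : ℕ) (H f : Euc n → ℝ) (x : Euc n) : ℝ :=
  Matrix.trace ((bmat n H x)⁻¹ * bmat n (fun y => H y * f (‖y‖⁻¹ • y)) x) - (n + 1) * f x

/-- The spherical Lebesgue measure on `S^n ⊂ ℝ^{n+1}` (up to a positive constant). -/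
def sphMeasure (n : ℕ) : Measure (sphere (0 : Euc n) 1) :=
  (volume : Measure (Euc n)).toSphere

/-- The density of the cone-volume-type measure `dV = h σ_n dμ` with respect to the spherical
Lebesgue measure. -/
def volDens (n : ℕ) (H : Euc n → ℝ) (x : Euc n) : ℝ := H x * sigman n H x

/-!
Let `H` be positively homogeneous of degree one on a space of dimension `d`. The gradient of the
compactly supported function `w(‖y‖) H(y)` has integral zero. Since `∇H` is constant along rays,
that gradient at `r x`, `‖x‖ = 1`, equals `r w'(r) H(x) x + w(r) ∇H(x)`, so polar coordinates and an
integration by parts in `r` give `∫ ∇H = d ∫ H(x) x` over the unit sphere. For the function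
`‖y‖^(-p) H(y)^(p + 1)`, again homogeneous of degree one, this reads
`(p + 1) ∫ H^p ∇H = (d + p) ∫ H^(p + 1) x`, and `∇̄H = ∇H - H x` turns it into
`(d + p) ∫ H^p ∇̄H = (d - 1) ∫ H^p ∇H`. The curvature equation says `r^α dV = h^p dμ`.
-/

open Set Filter Topology Module
open scoped Gradient

section Polar

variable {E F : Type*} [NormedAddCommGroup E] [NormedSpace ℝ E] [FiniteDimensional ℝ E]
  [Nontrivial E] [MeasurableSpace E] [BorelSpace E] [NormedAddCommGroup F] [NormedSpace ℝ F]

lemma integral_volumeIoiPow (m : ℕ) (f : ℝ → F) :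
    ∫ r : Ioi (0 : ℝ), f r ∂(Measure.volumeIoiPow m) = ∫ r in Ioi (0 : ℝ), r ^ m • f r := by
  simp only [Measure.volumeIoiPow, ENNReal.ofReal]
  rw [integral_withDensity_eq_integral_smul
      (measurable_subtype_coe.pow_const _).real_toNNReal,
    integral_subtype_comap measurableSet_Ioi fun r ↦ Real.toNNReal (r ^ m) • f r]
  refine setIntegral_congr_fun measurableSet_Ioi fun r hr ↦ ?_
  rw [NNReal.smul_def, Real.coe_toNNReal _ (pow_nonneg hr.out.le _)]

lemma integral_eq_integral_toSphere_integral_Ioi (μ : Measure E) [μ.IsAddHaarMeasure]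
    {f : E → F} (hf : Integrable f μ) :
    ∫ y, f y ∂μ = ∫ x : sphere (0 : E) 1,
      (∫ r in Ioi (0 : ℝ), r ^ (finrank ℝ E - 1) • f (r • (x : E))) ∂μ.toSphere := by
  let g : sphere (0 : E) 1 × Ioi (0 : ℝ) → F := fun z ↦ f (z.2.1 • z.1.1)
  have hpolar := μ.measurePreserving_homeomorphUnitSphereProd
  have hemb := (homeomorphUnitSphereProd E).measurableEmbedding
  have hg_comp (y : ({0}ᶜ : Set E)) : g (homeomorphUnitSphereProd E y) = f y := by
    have hy : ‖y.1‖ ≠ 0 := norm_ne_zero_iff.2 y.2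
    simp [g, smul_inv_smul₀ hy]
  have hg : Integrable g (μ.toSphere.prod (.volumeIoiPow (finrank ℝ E - 1))) := by
    rw [← hpolar.integrable_comp_emb hemb]
    refine Integrable.congr ?_ (.of_forall fun y ↦ (hg_comp y).symm)
    exact (integrableOn_iff_comap_subtypeVal (measurableSet_singleton 0).compl).1 hf.integrableOn
  calc
    ∫ y, f y ∂μ = ∫ y : ({0}ᶜ : Set E), f y ∂(μ.comap (↑)) := by
      rw [integral_subtype_comap (measurableSet_singleton _).compl f, restrict_compl_singleton]
    _ = ∫ z, g z ∂(μ.toSphere.prod (.volumeIoiPow (finrank ℝ E - 1))) := by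
      simp only [← hg_comp]
      exact hpolar.integral_comp hemb g
    _ = _ := by
      rw [integral_prod g hg]
      exact integral_congr_ae (.of_forall fun x ↦ integral_volumeIoiPow _ fun r ↦ f (r • (x : E)))

end Polar

lemma integrable_pow_mul_of_hasCompactSupport (m : ℕ) {w : ℝ → ℝ} (hw : Continuous w)
    (hwc : HasCompactSupport w) : Integrable fun r ↦ r ^ m * w r :=
  ((continuous_pow m).mul hw).integrable_of_hasCompactSupport hwc.mul_left

lemma integral_Ioi_pow_succ_mul_deriv (m : ℕ) {w : ℝ → ℝ} (hw : ContDiff ℝ 1 w)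
    (hwc : HasCompactSupport w) :
    ∫ r in Ioi (0 : ℝ), r ^ (m + 1) * deriv w r
      = -((m + 1) * ∫ r in Ioi (0 : ℝ), r ^ m * w r) := by
  have hderiv (r : ℝ) : deriv (fun r ↦ r ^ (m + 1) * w r) r
      = (m + 1) * (r ^ m * w r) + r ^ (m + 1) * deriv w r := by
    have := (hasDerivAt_pow (m + 1) r).fun_mul (hw.differentiable one_ne_zero r).hasDerivAt
    rw [this.deriv]
    push_cast
    ring
  have hint : Integrable fun r ↦ r ^ m * w r :=
    integrable_pow_mul_of_hasCompactSupport m hw.continuous hwc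
  have hint' : Integrable fun r ↦ r ^ (m + 1) * deriv w r :=
    integrable_pow_mul_of_hasCompactSupport (m + 1) (hw.continuous_deriv le_rfl) hwc.deriv
  have hFTC := HasCompactSupport.integral_Ioi_deriv_eq ((contDiff_id.pow (m + 1)).mul hw)
    hwc.mul_left 0
  simp only [id, hderiv] at hFTC
  rw [integral_add (hint.const_mul _).integrableOn hint'.integrableOn, integral_const_mul,
    zero_pow m.succ_ne_zero, zero_mul] at hFTC
  linarith

lemma integral_Ioi_pow_mul_pos (m : ℕ) {w : ℝ → ℝ} (hw : Continuous w) (hwc : HasCompactSupport w)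
    (hw_supp : tsupport w ⊆ Ioi 0) (hw_nonneg : 0 ≤ w) (hw_ne : w ≠ 0) :
    0 < ∫ r in Ioi (0 : ℝ), r ^ m * w r := by
  have hpos_of_ne {r : ℝ} (hr : w r ≠ 0) : 0 < r := hw_supp (subset_tsupport w hr)
  obtain ⟨a, ha⟩ : ∃ a, w a ≠ 0 := Function.ne_iff.1 hw_ne
  rw [setIntegral_eq_integral_of_forall_compl_eq_zero fun r hr ↦ by
    rw [not_imp_comm.1 hpos_of_ne hr, mul_zero]]
  refine ((continuous_pow m).mul hw).integral_pos_of_hasCompactSupport_nonneg_nonzero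
    hwc.mul_left (fun r ↦ ?_) (x := a) (mul_ne_zero (pow_ne_zero m (hpos_of_ne ha).ne') ha)
  rcases eq_or_ne (w r) 0 with hr | hr
  · simp [hr]
  · exact mul_nonneg (pow_nonneg (hpos_of_ne hr).le m) (hw_nonneg r)

lemma hasCompactSupport_comp_norm {E : Type*} [NormedAddCommGroup E] [ProperSpace E] {w : ℝ → ℝ}
    (hwc : HasCompactSupport w) :
    HasCompactSupport fun y : E ↦ w ‖y‖ := by
  obtain ⟨R, hR⟩ := hwc.isCompact.isBounded.subset_closedBall 0
  refine .intro (isCompact_closedBall (0 : E) R) fun y hy ↦ image_eq_zero_of_notMem_tsupport ?_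
  exact fun h ↦ hy (by simpa using hR h)

section Gradient

variable {E : Type*} [NormedAddCommGroup E] [InnerProductSpace ℝ E]

lemma contDiff_comp_norm_mul {k : WithTop ℕ∞} {w : ℝ → ℝ} {f : E → ℝ} (hw : ContDiff ℝ k w)
    (hw_supp : tsupport w ⊆ Ioi 0) (hf : ContDiffOn ℝ k f {0}ᶜ) :
    ContDiff ℝ k fun y ↦ w ‖y‖ * f y := by
  refine contDiff_iff_contDiffAt.2 fun y ↦ ?_
  rcases eq_or_ne y 0 with rfl | hy
  · have hw_zero : w =ᶠ[𝓝 ‖(0 : E)‖] 0 := by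
      rw [norm_zero, ← notMem_tsupport_iff_eventuallyEq]
      exact fun h ↦ lt_irrefl (0 : ℝ) (hw_supp h)
    refine (contDiffAt_const (c := (0 : ℝ))).congr_of_eventuallyEq ?_
    filter_upwards [continuous_norm.continuousAt.eventually hw_zero] with y hy
    rw [hy, Pi.zero_apply, zero_mul]
  · exact (hw.contDiffAt.comp y (contDiffAt_norm ℝ hy)).mul
      (hf.contDiffAt (isOpen_compl_singleton.mem_nhds hy))

lemma hasGradientAt_norm [CompleteSpace E] {x : E} (hx : x ≠ 0) :
    HasGradientAt (fun y : E ↦ ‖y‖) (‖x‖⁻¹ • x) x := by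
  have hsqrt := (hasStrictFDerivAt_norm_sq x).hasFDerivAt.sqrt (by simpa using hx)
  simp only [Real.sqrt_sq (norm_nonneg _)] at hsqrt
  rw [hasGradientAt_iff_hasFDerivAt]
  refine hsqrt.congr_fderiv (ContinuousLinearMap.ext fun v ↦ ?_)
  simp only [one_div, _root_.mul_inv_rev, _root_.smul_apply, coe_innerSL_apply, nsmul_eq_mul,
    Nat.cast_ofNat, smul_eq_mul, map_smul, InnerProductSpace.toDual_apply_apply]
  field_simp

lemma hasGradientAt_norm_rpow_mul_rpow [CompleteSpace E] (s t : ℝ) {f : E → ℝ} {x : E}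
    (hx : ‖x‖ = 1) (hfx : f x ≠ 0 ∨ 1 ≤ t) (hf : DifferentiableAt ℝ f x) :
    HasGradientAt (fun y ↦ ‖y‖ ^ s * f y ^ t)
      ((t * f x ^ (t - 1)) • ∇ f x + (s * f x ^ t) • x) x := by
  have hx0 : x ≠ 0 := norm_ne_zero_iff.1 (by simp [hx])
  have hnorm := (hasGradientAt_norm hx0).hasFDerivAt.rpow_const (p := s) (.inl (by simp [hx]))
  have hpow := hf.hasFDerivAt.rpow_const (p := t) hfx
  refine (hnorm.mul hpow).congr_fderiv ?_
  ext v
  simp only [hx, Real.one_rpow, one_smul, mul_one, inv_one, _root_.add_apply, _root_.smul_apply,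
    smul_eq_mul, InnerProductSpace.toDual_apply_apply, map_add, map_smul, toDual_gradient]
  ring

lemma continuousOn_gradient [CompleteSpace E] {f : E → ℝ} {s : Set E}
    (hf : ContDiffOn ℝ 1 f s) (hs : IsOpen s) : ContinuousOn (∇ f) s :=
  (InnerProductSpace.toDual ℝ E).symm.continuous.comp_continuousOn
    (hf.continuousOn_fderiv_of_isOpen hs le_rfl)

variable [FiniteDimensional ℝ E] [MeasurableSpace E] [BorelSpace E] (μ : Measure E)

lemma integrable_gradient_of_hasCompactSupport [IsFiniteMeasureOnCompacts μ] {u : E → ℝ}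
    (hu : ContDiff ℝ 1 u) (huc : HasCompactSupport u) : Integrable (∇ u) μ := by
  have hcont : Continuous (∇ u) :=
    (InnerProductSpace.toDual ℝ E).symm.continuous.comp (hu.continuous_fderiv one_ne_zero)
  exact hcont.integrable_of_hasCompactSupport
    ((huc.fderiv ℝ).comp_left (map_zero (InnerProductSpace.toDual ℝ E).symm))

lemma integral_gradient_eq_zero [μ.IsAddHaarMeasure] {u : E → ℝ} (hu : ContDiff ℝ 1 u)
    (huc : HasCompactSupport u) : ∫ y, ∇ u y ∂μ = 0 := by
  have hint : Integrable (∇ u) μ := integrable_gradient_of_hasCompactSupport μ hu huc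
  refine ext_inner_left ℝ fun v ↦ ?_
  rw [← integral_inner hint, inner_zero_right]
  have hint_v : Integrable (fun y ↦ fderiv ℝ u y v) μ := by
    simpa using hint.const_inner (𝕜 := ℝ) v
  simpa using integral_mul_fderiv_eq_neg_fderiv_mul_of_integrable (μ := μ) (f := fun _ ↦ (1 : ℝ))
    (g := u) (v := v) (by simp) (by simpa using hint_v)
    (by simpa using hu.continuous.integrable_of_hasCompactSupport huc) (by simp)
    (fun y _ ↦ hu.differentiable one_ne_zero y)

end Gradient

lemma differentiableAt_of_contDiffOn_compl_singleton {E F : Type*} [NormedAddCommGroup E]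
    [NormedSpace ℝ E] [NormedAddCommGroup F] [NormedSpace ℝ F] {f : E → F} {a x : E}
    (hf : ContDiffOn ℝ 1 f {a}ᶜ) (hx : x ≠ a) : DifferentiableAt ℝ f x :=
  (hf.contDiffAt (isOpen_compl_singleton.mem_nhds hx)).differentiableAt one_ne_zero

lemma integrable_toSphere_of_continuousOn {E F : Type*} [NormedAddCommGroup E] [NormedSpace ℝ E]
    [FiniteDimensional ℝ E] [MeasurableSpace E] [BorelSpace E] [NormedAddCommGroup F]
    (μ : Measure E) [μ.IsAddHaarMeasure] {f : E → F}
    (hf : ContinuousOn f {0}ᶜ) : Integrable (fun x : sphere (0 : E) 1 ↦ f x) μ.toSphere :=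
  (hf.comp_continuous continuous_subtype_val
    ne_zero_of_mem_unit_sphere).integrable_of_hasCompactSupport (.of_compactSpace _)

/-- Positive homogeneity of degree one, the defining property of the extension of a support
function from the unit sphere to the whole space. -/
def IsPosHomogeneous {E : Type*} [SMul ℝ E] (H : E → ℝ) : Prop :=
  ∀ c : ℝ, 0 < c → ∀ x : E, H (c • x) = c * H x

namespace IsPosHomogeneous

section NormedSpace

variable {E : Type*} [NormedAddCommGroup E] [NormedSpace ℝ E] {H : E → ℝ}

lemma apply_zero (hH : IsPosHomogeneous H) : H 0 = 0 := by
  have := hH 2 two_pos 0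
  rw [smul_zero] at this
  linarith

lemma pos_of_ne_zero (hH : IsPosHomogeneous H) (hpos : ∀ x ∈ sphere (0 : E) 1, 0 < H x)
    {x : E} (hx : x ≠ 0) : 0 < H x := by
  have hnorm : 0 < ‖x‖ := norm_pos_iff.2 hx
  rw [← smul_inv_smul₀ hnorm.ne' x, hH _ hnorm]
  exact mul_pos hnorm (hpos _ (by simp [norm_smul, hnorm.ne']))

lemma nonneg (hH : IsPosHomogeneous H) (hpos : ∀ x ∈ sphere (0 : E) 1, 0 < H x) (x : E) :
    0 ≤ H x := by
  rcases eq_or_ne x 0 with rfl | hx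
  · exact hH.apply_zero.ge
  · exact (hH.pos_of_ne_zero hpos hx).le

lemma norm_rpow_mul_rpow (hH : IsPosHomogeneous H) (hpos : ∀ x ∈ sphere (0 : E) 1, 0 < H x)
    (p : ℝ) : IsPosHomogeneous fun y ↦ ‖y‖ ^ (-p) * H y ^ (p + 1) := fun c hc x ↦ by
  have hc_rpow : c ^ (-p) * c ^ (p + 1) = c := by
    rw [← Real.rpow_add hc, neg_add_cancel_left, Real.rpow_one]
  calc ‖c • x‖ ^ (-p) * H (c • x) ^ (p + 1)
      = c ^ (-p) * c ^ (p + 1) * (‖x‖ ^ (-p) * H x ^ (p + 1)) := by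
        rw [hH c hc, norm_smul, Real.norm_of_nonneg hc.le,
          Real.mul_rpow hc.le (norm_nonneg x), Real.mul_rpow hc.le (hH.nonneg hpos x)]
        ring
    _ = c * (‖x‖ ^ (-p) * H x ^ (p + 1)) := by rw [hc_rpow]

lemma integrable_toSphere_rpow_smul [FiniteDimensional ℝ E] [MeasurableSpace E] [BorelSpace E]
    {F : Type*} [NormedAddCommGroup F] [NormedSpace ℝ F] (μ : Measure E) [μ.IsAddHaarMeasure]
    (hH : IsPosHomogeneous H) (hH0 : ContinuousOn H {0}ᶜ)
    (hpos : ∀ x ∈ sphere (0 : E) 1, 0 < H x) (p : ℝ) {f : E → F} (hf : ContinuousOn f {0}ᶜ) :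
    Integrable (fun x : sphere (0 : E) 1 ↦ H x ^ p • f x) μ.toSphere :=
  integrable_toSphere_of_continuousOn (f := fun x ↦ H x ^ p • f x) μ
    ((hH0.rpow_const fun _ hx ↦ .inl (hH.pos_of_ne_zero hpos hx).ne').smul hf)

end NormedSpace

section InnerProductSpace

variable {E : Type*} [NormedAddCommGroup E] [InnerProductSpace ℝ E] [CompleteSpace E] {H : E → ℝ}

lemma gradient_smul (hH : IsPosHomogeneous H) {r : ℝ} (hr : 0 < r) (x : E) :
    ∇ H (r • x) = ∇ H x := by
  have hscale : r • fderiv ℝ H (r • x) = r • fderiv ℝ H x := by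
    rw [← fderiv_comp_smul, funext (hH r hr)]
    exact congrFun (fderiv_const_smul_field r) x
  rw [gradient, gradient, smul_right_injective _ hr.ne' hscale]

lemma inner_gradient_self (hH : IsPosHomogeneous H) {x : E} (hx : DifferentiableAt ℝ H x) :
    ⟪∇ H x, x⟫ = H x := by
  have hray : HasDerivAt (fun t : ℝ ↦ H (t • x)) (fderiv ℝ H x x) 1 := by
    have hx' : HasFDerivAt H (fderiv ℝ H x) ((1 : ℝ) • x) := by simpa using hx.hasFDerivAt
    simpa [Function.comp_def] using
      hx'.comp_hasDerivAt (1 : ℝ) ((hasDerivAt_id (1 : ℝ)).smul_const x)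
  have hlin : (fun t : ℝ ↦ H (t • x)) =ᶠ[𝓝 1] fun t ↦ t * H x := by
    filter_upwards [lt_mem_nhds one_pos] with t ht using hH t ht x
  rw [inner_gradient_left]
  exact (hray.congr_of_eventuallyEq hlin.symm).unique (hasDerivAt_mul_const (H x))

lemma gradient_ne_zero (hH : IsPosHomogeneous H) {x : E} (hx : H x ≠ 0)
    (hd : DifferentiableAt ℝ H x) : ∇ H x ≠ 0 := fun h ↦
  hx (by rw [← hH.inner_gradient_self hd, h, inner_zero_left])

lemma gradient_comp_norm_mul_smul (hH : IsPosHomogeneous H) {w : ℝ → ℝ} {r : ℝ} (hr : 0 < r)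
    (hw : DifferentiableAt ℝ w r) {x : E} (hx : ‖x‖ = 1) (hd : DifferentiableAt ℝ H (r • x)) :
    ∇ (fun y ↦ w ‖y‖ * H y) (r • x) = (r * deriv w r * H x) • x + w r • ∇ H x := by
  have hx0 : x ≠ 0 := norm_ne_zero_iff.1 (by simp [hx])
  have hnorm : ‖r • x‖ = r := by simp [norm_smul, hx, abs_of_pos hr]
  have hcut := (hnorm.symm ▸ hw).hasDerivAt.comp_hasFDerivAt (r • x)
    (hasGradientAt_norm (smul_ne_zero hr.ne' hx0)).hasFDerivAt
  refine HasGradientAt.gradient ((hcut.mul hd.hasFDerivAt).congr_fderiv ?_)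
  ext v
  have hfd : fderiv ℝ H (r • x) v = ⟪∇ H x, v⟫ := by
    rw [← inner_gradient_left, hH.gradient_smul hr]
  simp only [Function.comp_apply, hnorm, hH r hr, inv_smul_smul₀ hr.ne', _root_.add_apply,
    _root_.smul_apply, hfd, inner_gradient_left, smul_eq_mul,
    InnerProductSpace.toDual_apply_apply, map_add, map_smul, toDual_gradient]
  ring

lemma integral_Ioi_pow_smul_gradient_comp_norm_mul (hH : IsPosHomogeneous H)
    (hH1 : ContDiffOn ℝ 1 H {0}ᶜ) {w : ℝ → ℝ} (hw : ContDiff ℝ 1 w) (hwc : HasCompactSupport w)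
    (m : ℕ) {x : E} (hx : ‖x‖ = 1) :
    ∫ r in Ioi (0 : ℝ), r ^ m • ∇ (fun y ↦ w ‖y‖ * H y) (r • x)
      = (∫ r in Ioi (0 : ℝ), r ^ m * w r) • (∇ H x - ((m : ℝ) + 1) • H x • x) := by
  have hx0 : x ≠ 0 := norm_ne_zero_iff.1 (by simp [hx])
  have hint : Integrable fun r ↦ r ^ m * w r :=
    integrable_pow_mul_of_hasCompactSupport m hw.continuous hwc
  have hint' : Integrable fun r ↦ r ^ (m + 1) * deriv w r :=
    integrable_pow_mul_of_hasCompactSupport (m + 1) (hw.continuous_deriv le_rfl) hwc.deriv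
  calc ∫ r in Ioi (0 : ℝ), r ^ m • ∇ (fun y ↦ w ‖y‖ * H y) (r • x)
      = ∫ r in Ioi (0 : ℝ),
          ((r ^ (m + 1) * deriv w r) • H x • x + (r ^ m * w r) • ∇ H x) := by
        refine setIntegral_congr_fun measurableSet_Ioi fun r hr ↦ ?_
        have hd := differentiableAt_of_contDiffOn_compl_singleton hH1 (smul_ne_zero hr.out.ne' hx0)
        simp only [hH.gradient_comp_norm_mul_smul hr (hw.differentiable one_ne_zero r) hx hd]
        module
    _ = (∫ r in Ioi (0 : ℝ), r ^ (m + 1) * deriv w r) • H x • x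
          + (∫ r in Ioi (0 : ℝ), r ^ m * w r) • ∇ H x := by
        rw [integral_add (hint'.integrableOn.smul_const _) (hint.integrableOn.smul_const _),
          integral_smul_const, integral_smul_const]
    _ = _ := by
        rw [integral_Ioi_pow_succ_mul_deriv m hw hwc]
        module

lemma gradient_comp_normalize (hH : IsPosHomogeneous H) {x : E} (hx : ‖x‖ = 1)
    (hd : DifferentiableAt ℝ H x) :
    ∇ (fun y ↦ H (‖y‖⁻¹ • y)) x = ∇ H x - H x • x := by
  have hx0 : x ≠ 0 := norm_ne_zero_iff.1 (by simp [hx])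
  have hext : (fun y ↦ H (‖y‖⁻¹ • y)) =ᶠ[𝓝 x] fun y ↦ ‖y‖ ^ (-1 : ℝ) * H y ^ (1 : ℝ) := by
    filter_upwards [isOpen_compl_singleton.mem_nhds hx0] with y hy
    rw [hH _ (inv_pos.2 (norm_pos_iff.2 hy)), Real.rpow_neg_one, Real.rpow_one]
  rw [hext.gradient_eq, (hasGradientAt_norm_rpow_mul_rpow (-1) 1 hx (.inr le_rfl) hd).gradient]
  simp [sub_eq_add_neg]

end InnerProductSpace

section Sphere

variable {E : Type*} [NormedAddCommGroup E] [InnerProductSpace ℝ E] [FiniteDimensional ℝ E]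
  [Nontrivial E] [MeasurableSpace E] [BorelSpace E] {H : E → ℝ} (μ : Measure E)
  [μ.IsAddHaarMeasure]

theorem integral_toSphere_gradient (hH : IsPosHomogeneous H) (hH1 : ContDiffOn ℝ 1 H {0}ᶜ) :
    ∫ x : sphere (0 : E) 1, ∇ H x ∂μ.toSphere
      = (finrank ℝ E : ℝ) • ∫ x : sphere (0 : E) 1, H x • (x : E) ∂μ.toSphere := by
  obtain ⟨w, hw_supp, hwc, hw, hw_range, hw_one⟩ :=
    exists_contDiff_tsupport_subset (n := 1) (Ioi_mem_nhds (one_pos (α := ℝ)))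
  have hmass := integral_Ioi_pow_mul_pos (finrank ℝ E - 1) hw.continuous hwc hw_supp
    (fun r ↦ (hw_range (mem_range_self r)).1) (ne_of_apply_ne (· 1) (by simp [hw_one]))
  have hu : ContDiff ℝ 1 fun y ↦ w ‖y‖ * H y := contDiff_comp_norm_mul hw hw_supp hH1
  have huc : HasCompactSupport fun y ↦ w ‖y‖ * H y :=
    (hasCompactSupport_comp_norm hwc).mul_right
  have hdim : ((finrank ℝ E - 1 : ℕ) : ℝ) + 1 = finrank ℝ E := by
    exact_mod_cast Nat.sub_add_cancel finrank_pos
  have hint_grad : Integrable (fun x : sphere (0 : E) 1 ↦ ∇ H x) μ.toSphere :=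
    integrable_toSphere_of_continuousOn μ (continuousOn_gradient hH1 isOpen_compl_singleton)
  have hint_radial : Integrable (fun x : sphere (0 : E) 1 ↦ H x • (x : E)) μ.toSphere :=
    integrable_toSphere_of_continuousOn (f := fun x ↦ H x • x) μ
      (hH1.continuousOn.smul continuousOn_id)
  have hzero := integral_gradient_eq_zero μ hu huc
  rw [integral_eq_integral_toSphere_integral_Ioi μ
    (integrable_gradient_of_hasCompactSupport μ hu huc)] at hzero
  simp only [hH.integral_Ioi_pow_smul_gradient_comp_norm_mul hH1 hw hwc _
    (norm_eq_of_mem_sphere _), integral_smul, hdim] at hzero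
  rw [integral_sub hint_grad (hint_radial.fun_smul _), integral_smul] at hzero
  exact sub_eq_zero.1 ((smul_eq_zero.1 hzero).resolve_left hmass.ne')

theorem integral_toSphere_rpow_smul_gradient (hH : IsPosHomogeneous H)
    (hH1 : ContDiffOn ℝ 1 H {0}ᶜ) (hpos : ∀ x ∈ sphere (0 : E) 1, 0 < H x) (p : ℝ) :
    (p + 1) • ∫ x : sphere (0 : E) 1, H x ^ p • ∇ H x ∂μ.toSphere
      = (finrank ℝ E + p) • ∫ x : sphere (0 : E) 1, H x ^ (p + 1) • (x : E) ∂μ.toSphere := by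
  have hsmooth : ContDiffOn ℝ 1 (fun y ↦ ‖y‖ ^ (-p) * H y ^ (p + 1)) {0}ᶜ := fun y hy ↦
    ((contDiffAt_norm ℝ hy).rpow_const_of_ne (norm_ne_zero_iff.2 hy)).contDiffWithinAt.mul
      ((hH1 y hy).rpow_const_of_ne (hH.pos_of_ne_zero hpos hy).ne')
  have hgrad (x : sphere (0 : E) 1) : ∇ (fun y ↦ ‖y‖ ^ (-p) * H y ^ (p + 1)) (x : E)
      = (p + 1) • H x ^ p • ∇ H x - p • H x ^ (p + 1) • (x : E) := by
    have hd := differentiableAt_of_contDiffOn_compl_singleton hH1 (ne_zero_of_mem_unit_sphere x)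
    rw [(hasGradientAt_norm_rpow_mul_rpow (-p) (p + 1) (norm_eq_of_mem_sphere x)
      (.inl (hpos x x.2).ne') hd).gradient, add_sub_cancel_right]
    module
  have hint_grad := hH.integrable_toSphere_rpow_smul μ hH1.continuousOn hpos p
    (continuousOn_gradient hH1 isOpen_compl_singleton)
  have hint_radial := hH.integrable_toSphere_rpow_smul μ hH1.continuousOn hpos (p + 1)
    (continuousOn_id' _)
  have hdiv := (hH.norm_rpow_mul_rpow hpos p).integral_toSphere_gradient μ hsmooth
  simp only [hgrad, norm_eq_of_mem_sphere, Real.one_rpow, one_mul] at hdiv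
  rw [integral_sub (hint_grad.fun_smul _) (hint_radial.fun_smul _), integral_smul, integral_smul,
    sub_eq_iff_eq_add] at hdiv
  rw [hdiv, ← add_smul]

theorem integral_toSphere_rpow_smul_gradient_comp_normalize (hH : IsPosHomogeneous H)
    (hH1 : ContDiffOn ℝ 1 H {0}ᶜ) (hpos : ∀ x ∈ sphere (0 : E) 1, 0 < H x) (p : ℝ) :
    (finrank ℝ E + p) •
        ∫ x : sphere (0 : E) 1, H x ^ p • ∇ (fun y ↦ H (‖y‖⁻¹ • y)) (x : E) ∂μ.toSphere
      = (finrank ℝ E - 1 : ℝ) • ∫ x : sphere (0 : E) 1, H x ^ p • ∇ H x ∂μ.toSphere := by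
  have hsplit (x : sphere (0 : E) 1) : H x ^ p • ∇ (fun y ↦ H (‖y‖⁻¹ • y)) (x : E)
      = H x ^ p • ∇ H x - H x ^ (p + 1) • (x : E) := by
    have hd := differentiableAt_of_contDiffOn_compl_singleton hH1 (ne_zero_of_mem_unit_sphere x)
    rw [hH.gradient_comp_normalize (norm_eq_of_mem_sphere x) hd,
      Real.rpow_add_one (hpos x x.2).ne', smul_sub, smul_smul]
  have hint_grad := hH.integrable_toSphere_rpow_smul μ hH1.continuousOn hpos p
    (continuousOn_gradient hH1 isOpen_compl_singleton)
  have hint_radial := hH.integrable_toSphere_rpow_smul μ hH1.continuousOn hpos (p + 1)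
    (continuousOn_id' _)
  simp only [hsplit]
  rw [integral_sub hint_grad hint_radial, smul_sub,
    ← hH.integral_toSphere_rpow_smul_gradient μ hH1 hpos p]
  module

end Sphere

end IsPosHomogeneous

lemma volDens_mul_norm_gradient_rpow {n : ℕ} {p q : ℝ} {H : Euc n → ℝ} {x : Euc n}
    (hpos : 0 < H x) (hgrad : ∇ H x ≠ 0)
    (heq : H x ^ (p - 1) * ‖∇ H x‖ ^ ((n : ℝ) + 1 - q) * gaussCurv n H x = 1) :
    volDens n H x * ‖∇ H x‖ ^ (q - (n : ℝ) - 1) = H x ^ p := by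
  have hsigman : sigman n H x = H x ^ (p - 1) * ‖∇ H x‖ ^ ((n : ℝ) + 1 - q) := by
    rw [gaussCurv] at heq
    exact (eq_of_mul_inv_eq_one heq).symm
  have hnorm : ‖∇ H x‖ ^ ((n : ℝ) + 1 - q) * ‖∇ H x‖ ^ (q - (n : ℝ) - 1) = 1 := by
    rw [← Real.rpow_add (norm_pos_iff.2 hgrad),
      show (n : ℝ) + 1 - q + (q - n - 1) = 0 by ring, Real.rpow_zero]
  calc volDens n H x * ‖∇ H x‖ ^ (q - (n : ℝ) - 1)
      = H x ^ (p - 1) * H x * (‖∇ H x‖ ^ ((n : ℝ) + 1 - q) * ‖∇ H x‖ ^ (q - (n : ℝ) - 1)) := by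
        rw [volDens, hsigman]
        ring
    _ = H x ^ p := by rw [hnorm, mul_one, ← Real.rpow_add_one hpos.ne', sub_add_cancel]

theorem integral_X_identities_general {n : ℕ} (hn : 1 ≤ n) {p q α : ℝ}
    (hα : α = q - (n : ℝ) - 1) {H : Euc n → ℝ} (hH : IsPosHomogeneous H)
    (hH2 : ContDiffOn ℝ 2 H {0}ᶜ) (hpos : ∀ x ∈ sphere (0 : Euc n) 1, 0 < H x)
    (heq : ∀ x ∈ sphere (0 : Euc n) 1,
      H x ^ (p - 1) * ‖∇ H x‖ ^ ((n : ℝ) + 1 - q) * gaussCurv n H x = 1) :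
    (∫ x : sphere (0 : Euc n) 1, volDens n H x • (‖∇ H x‖ ^ α • ∇ H x) ∂(sphMeasure n))
      = (∫ x : sphere (0 : Euc n) 1, H x ^ p • ∇ H x ∂(sphMeasure n))
    ∧ (∫ x : sphere (0 : Euc n) 1, H x ^ p • ∇ H x ∂(sphMeasure n))
      = (((n : ℝ) + 1 + p) / n) •
          ∫ x : sphere (0 : Euc n) 1,
            volDens n H x • (‖∇ H x‖ ^ α • sphGrad n H x) ∂(sphMeasure n) := by
  have hH1 : ContDiffOn ℝ 1 H {0}ᶜ := hH2.of_le one_le_two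
  have hdens (x : sphere (0 : Euc n) 1) : volDens n H x * ‖∇ H x‖ ^ α = H x ^ p := by
    have hd := differentiableAt_of_contDiffOn_compl_singleton hH1 (ne_zero_of_mem_unit_sphere x)
    have hgrad := hH.gradient_ne_zero (hpos x x.2).ne' hd
    rw [hα, volDens_mul_norm_gradient_rpow (hpos x x.2) hgrad (heq x x.2)]
  have hn0 : (n : ℝ) ≠ 0 := Nat.cast_ne_zero.2 (Nat.one_le_iff_ne_zero.1 hn)
  have hident := hH.integral_toSphere_rpow_smul_gradient_comp_normalize volume hH1 hpos p
  simp only [finrank_euclideanSpace_fin, Nat.cast_add_one, add_sub_cancel_right] at hident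
  simp only [smul_smul, hdens, true_and]
  rw [div_eq_inv_mul, mul_smul, eq_inv_smul_iff₀ hn0]
  exact hident.symm

/-- For a smooth, strictly convex body `K ⊂ ℝ^{n+1}` (`n ≥ 2`) with the
origin in its interior satisfying `h^{p-1}|Dh|^{n+1-q}𝒦 = 1` on `S^n`, with `α = q - n - 1`:
`∫ r^α X dV = ∫ X h^p dμ = ((n+1+p)/n) ∫ r^α ∇̄h dV` as vectors in `ℝ^{n+1}`. -/
theorem integral_X_identities
    (n : ℕ) (hn : 2 ≤ n) (p q α : ℝ) (hα : α = q - (n : ℝ) - 1)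
    (H : Euc n → ℝ) (K : Set (Euc n))
    (hK : K = {y : Euc n | ∀ x : Euc n, ⟪x, y⟫ ≤ H x})
    (hhomog : ∀ c : ℝ, 0 < c → ∀ x : Euc n, H (c • x) = c * H x)
    (hconv : ConvexOn ℝ Set.univ H)
    (hsmooth : ContDiffOn ℝ (⊤ : ℕ∞) H {(0 : Euc n)}ᶜ)
    (hpos : ∀ x ∈ sphere (0 : Euc n) 1, 0 < H x)
    (hposdef : ∀ x ∈ sphere (0 : Euc n) 1, (bmat n H x).PosDef)
    (heq : ∀ x ∈ sphere (0 : Euc n) 1,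
      H x ^ (p - 1) * ‖gradient H x‖ ^ ((n : ℝ) + 1 - q) * gaussCurv n H x = 1) :
    (∫ x : sphere (0 : Euc n) 1,
        volDens n H x • (‖gradient H x‖ ^ α • gradient H x) ∂(sphMeasure n))
      = (∫ x : sphere (0 : Euc n) 1, H x ^ p • gradient H x ∂(sphMeasure n))
    ∧ (∫ x : sphere (0 : Euc n) 1, H x ^ p • gradient H x ∂(sphMeasure n))
      = (((n : ℝ) + 1 + p) / n) •
          ∫ x : sphere (0 : Euc n) 1,
            volDens n H x • (‖gradient H x‖ ^ α • sphGrad n H x) ∂(sphMeasure n) := by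
  exact integral_X_identities_general (one_le_two.trans hn) hα hhomog
    (hsmooth.of_le (WithTop.coe_le_coe.2 le_top)) hpos heq
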